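/- arXiv:2602.05304 — 2 statements merged into one kernel-verified Lean document; each statement's English description precedes it below -/
import Mathlib

section
/- (SAG, strongly convex, high probability.) Suppose f is μ-strongly convex (μ > 0) with minimizer x* and κ := L/μ. Fix K ≥ 1, δ ∈ (0,1), let τ = ⌈(8N/3)·log(NK/δ)⌉, set α = 1/(16 L τ), and assume K > τ. Then, with probability at least 1 − δ over the i.i.d. uniform sampling, the SAG iterates satisfy f(x_K) − f(x*) ≤ 6 L B² · (1 − 1/(64 τ κ))^K. -/
open scoped RealInnerProductSpace

/-!
By a union bound over windows and indices, with probability at least `1 - δ` every index is sampled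
in each window of `τ` consecutive steps. On that event every stored gradient is at most `τ` steps
old, so the SAG direction differs from `∇ f (x k)` by at most `α L` times the sum of the last `τ`
direction norms. Strong convexity gives the Polyak–Łojasiewicz inequality, by which a descent step
contracts `f - f*` by `1 - α μ`; the error of the step, a multiple of the last `τ` values of
`‖g‖²`, is absorbed by adding a linearly weighted sum of those values to `f - f*`. During the first
`τ` steps, where stored gradients may still be zero, the iterates grow by at most
`(1 + α L)^τ ≤ 2`.
-/

open scoped Gradient

section Smooth

variable {E : Type*} [NormedAddCommGroup E] [InnerProductSpace ℝ E] [CompleteSpace E]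
  {f : E → ℝ} {L μ : ℝ}

theorem gradient_eq_zero_of_forall_le {z : E} (hz : ∀ y, f z ≤ f y) : ∇ f z = 0 := by
  have hmin : IsLocalMin f z := Filter.Eventually.of_forall hz
  simp [gradient, hmin.fderiv_eq_zero]

theorem hasDerivAt_comp_add_smul (hf : Differentiable ℝ f) (x v : E) (t : ℝ) :
    HasDerivAt (fun s : ℝ => f (x + s • v)) ⟪∇ f (x + t • v), v⟫ t := by
  have hline : HasDerivAt (fun s : ℝ => x + s • v) v t := by
    simpa using ((hasDerivAt_id t).smul_const v).const_add x
  rw [inner_gradient_left]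
  exact (hf (x + t • v)).hasFDerivAt.comp_hasDerivAt t hline

theorem inner_gradient_sub_le (hs : ∀ x y, ‖∇ f x - ∇ f y‖ ≤ L * ‖x - y‖) (x v : E) {t : ℝ}
    (ht : 0 ≤ t) : ⟪∇ f (x + t • v) - ∇ f x, v⟫ ≤ L * ‖v‖ ^ 2 * t :=
  calc ⟪∇ f (x + t • v) - ∇ f x, v⟫ ≤ ‖∇ f (x + t • v) - ∇ f x‖ * ‖v‖ := real_inner_le_norm _ _
    _ ≤ L * ‖x + t • v - x‖ * ‖v‖ := by gcongr; exact hs _ _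
    _ = L * ‖v‖ ^ 2 * t := by
        rw [add_sub_cancel_left, norm_smul, Real.norm_of_nonneg ht]; ring

theorem le_add_inner_add_of_lipschitz_gradient (hf : Differentiable ℝ f)
    (hs : ∀ x y, ‖∇ f x - ∇ f y‖ ≤ L * ‖x - y‖) (x v : E) :
    f (x + v) ≤ f x + ⟪∇ f x, v⟫ + L / 2 * ‖v‖ ^ 2 := by
  let gap : ℝ → ℝ := fun t => f (x + t • v) - t * ⟪∇ f x, v⟫ - L / 2 * ‖v‖ ^ 2 * t ^ 2
  have hgap (t : ℝ) : HasDerivAt gap (⟪∇ f (x + t • v) - ∇ f x, v⟫ - L * ‖v‖ ^ 2 * t) t := by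
    refine (((hasDerivAt_comp_add_smul hf x v t).sub
      ((hasDerivAt_id t).mul_const ⟪∇ f x, v⟫)).sub
      (((hasDerivAt_id t).pow 2).const_mul (L / 2 * ‖v‖ ^ 2))).congr_deriv ?_
    simp only [inner_sub_left, id_eq, Nat.cast_ofNat]
    ring
  have hanti : AntitoneOn gap (Set.Icc 0 1) := by
    refine antitoneOn_of_deriv_nonpos (convex_Icc 0 1)
      (fun t _ => (hgap t).continuousAt.continuousWithinAt)
      (fun t _ => (hgap t).differentiableAt.differentiableWithinAt) fun t ht => ?_
    rw [(hgap t).deriv, sub_nonpos]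
    exact inner_gradient_sub_le hs x v (interior_subset ht).1
  have hle : gap 1 ≤ gap 0 := hanti (by simp) (by simp) zero_le_one
  simp only [gap, one_smul, zero_smul, add_zero] at hle
  linarith

theorem norm_gradient_le_of_gradient_eq_zero
    (hs : ∀ x y, ‖∇ f x - ∇ f y‖ ≤ L * ‖x - y‖) (hL : 0 ≤ L) {z : E} (hz : ∇ f z = 0)
    {B : ℝ} (hzB : ‖z‖ ≤ B) (y : E) : ‖∇ f y‖ ≤ L * (‖y‖ + B) :=
  calc ‖∇ f y‖ ≤ L * ‖y - z‖ := by simpa [hz] using hs y z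
    _ ≤ L * (‖y‖ + B) := by gcongr; exact (norm_sub_le y z).trans (by gcongr)

theorem sub_le_of_lipschitz_gradient (hf : Differentiable ℝ f)
    (hs : ∀ x y, ‖∇ f x - ∇ f y‖ ≤ L * ‖x - y‖) {z : E} (hz : ∇ f z = 0) (x : E) :
    f x - f z ≤ L / 2 * ‖x - z‖ ^ 2 := by
  have hdescent := le_add_inner_add_of_lipschitz_gradient hf hs z (x - z)
  rw [hz, inner_zero_left, add_sub_cancel] at hdescent
  linarith

theorem two_mul_mul_sub_le_norm_gradient_sq (hμ : 0 ≤ μ) {y z : E}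
    (h : f y + ⟪∇ f y, z - y⟫ + μ / 2 * ‖z - y‖ ^ 2 ≤ f z) :
    2 * μ * (f y - f z) ≤ ‖∇ f y‖ ^ 2 := by
  have hsq : 0 ≤ ‖∇ f y + μ • (z - y)‖ ^ 2 := sq_nonneg _
  rw [norm_add_sq_real, inner_smul_right, norm_smul, mul_pow, Real.norm_eq_abs, sq_abs] at hsq
  linarith [mul_le_mul_of_nonneg_left h hμ]

theorem strongConvexity_le_smoothness [Nontrivial E] (hf : Differentiable ℝ f)
    (hs : ∀ x y, ‖∇ f x - ∇ f y‖ ≤ L * ‖x - y‖)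
    (hsc : ∀ y z, f y + ⟪∇ f y, z - y⟫ + μ / 2 * ‖z - y‖ ^ 2 ≤ f z) : μ ≤ L := by
  obtain ⟨v, hv⟩ := exists_ne (0 : E)
  have hlower := hsc 0 v
  have hupper := le_add_inner_add_of_lipschitz_gradient hf hs 0 v
  rw [sub_zero] at hlower
  rw [zero_add] at hupper
  have hv2 : 0 < ‖v‖ ^ 2 := by positivity
  exact le_of_mul_le_mul_right (by linarith) hv2

theorem sub_smul_le_of_lipschitz_gradient (hf : Differentiable ℝ f)
    (hs : ∀ x y, ‖∇ f x - ∇ f y‖ ≤ L * ‖x - y‖) {α : ℝ} (x g : E) :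
    f (x - α • g) ≤ f x - α / 2 * ‖∇ f x‖ ^ 2 - α / 2 * (1 - α * L) * ‖g‖ ^ 2
      + α / 2 * ‖∇ f x - g‖ ^ 2 := by
  have hdescent := le_add_inner_add_of_lipschitz_gradient hf hs x (-(α • g))
  rw [← sub_eq_add_neg, inner_neg_right, inner_smul_right, norm_neg, norm_smul, mul_pow,
    Real.norm_eq_abs, sq_abs] at hdescent
  rw [norm_sub_sq_real]
  linarith

theorem sub_smul_sub_le_of_PL (hf : Differentiable ℝ f)
    (hs : ∀ x y, ‖∇ f x - ∇ f y‖ ≤ L * ‖x - y‖) {α c : ℝ} (hα : 0 ≤ α) (x g : E)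
    (hPL : 2 * μ * (f x - c) ≤ ‖∇ f x‖ ^ 2) :
    f (x - α • g) - c ≤ (1 - α * μ) * (f x - c) - α / 2 * (1 - α * L) * ‖g‖ ^ 2
      + α / 2 * ‖∇ f x - g‖ ^ 2 := by
  linarith [sub_smul_le_of_lipschitz_gradient hf hs (α := α) x g,
    mul_le_mul_of_nonneg_left hPL hα]

end Smooth

section Average

variable {ι : Type*} [Fintype ι]

theorem norm_inv_card_smul_sum_le [Nonempty ι] {E : Type*} [SeminormedAddCommGroup E]
    [NormedSpace ℝ E] {v : ι → E} {C : ℝ} (hv : ∀ i, ‖v i‖ ≤ C) :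
    ‖(Fintype.card ι : ℝ)⁻¹ • ∑ i, v i‖ ≤ C := by
  rw [norm_smul, norm_inv, Real.norm_natCast, inv_mul_le_iff₀ (by positivity)]
  simpa using norm_sum_le_of_le Finset.univ fun i _ => hv i

variable {E : Type*} [NormedAddCommGroup E] [InnerProductSpace ℝ E]

/-- The finite-sum objective `(1/N) ∑ᵢ fᵢ`, where `N` is the number of components. -/
noncomputable def averageObjective (fi : ι → E → ℝ) : E → ℝ :=
  fun z => (∑ i, fi i z) / Fintype.card ι

variable [CompleteSpace E] {fi : ι → E → ℝ} {L : ℝ}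

theorem hasGradientAt_averageObjective (hdiff : ∀ i, Differentiable ℝ (fi i)) (z : E) :
    HasGradientAt (averageObjective fi) ((Fintype.card ι : ℝ)⁻¹ • ∑ i, ∇ (fi i) z) z := by
  have hsum : HasFDerivAt (fun z => ∑ i, fi i z)
      (∑ i, InnerProductSpace.toDual ℝ E (∇ (fi i) z)) z :=
    HasFDerivAt.fun_sum fun i _ => (hdiff i z).hasGradientAt.hasFDerivAt
  rw [hasGradientAt_iff_hasFDerivAt, map_smul, map_sum]
  exact (hsum.const_mul (Fintype.card ι : ℝ)⁻¹).congr_of_eventuallyEq <|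
    .of_forall fun _ => div_eq_inv_mul _ _

theorem differentiable_averageObjective (hdiff : ∀ i, Differentiable ℝ (fi i)) :
    Differentiable ℝ (averageObjective fi) :=
  fun z => (hasGradientAt_averageObjective hdiff z).differentiableAt

theorem norm_gradient_averageObjective_sub_le [Nonempty ι] (hdiff : ∀ i, Differentiable ℝ (fi i))
    (hsmooth : ∀ i x y, ‖∇ (fi i) x - ∇ (fi i) y‖ ≤ L * ‖x - y‖) (x y : E) :
    ‖∇ (averageObjective fi) x - ∇ (averageObjective fi) y‖ ≤ L * ‖x - y‖ := by
  rw [(hasGradientAt_averageObjective hdiff x).gradient,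
    (hasGradientAt_averageObjective hdiff y).gradient, ← smul_sub, ← Finset.sum_sub_distrib]
  exact norm_inv_card_smul_sum_le fun i => hsmooth i x y

end Average

section Delay

/-- The weighted sum `∑_{j<T} (j+1) e_{k+j}` over the window of length `T` starting at `k`. The
weights increase towards the present, so that moving the window by one step decreases the weight of
every old term by exactly one; this is the memory part of the Lyapunov function for a recursion
with delay `T`. -/
def rampSum (e : ℕ → ℝ) (T k : ℕ) : ℝ :=
  ∑ j ∈ Finset.range T, ((j : ℝ) + 1) * e (k + j)

variable {a e : ℕ → ℝ} {T : ℕ}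

theorem rampSum_nonneg (he : ∀ k, 0 ≤ e k) (k : ℕ) : 0 ≤ rampSum e T k :=
  Finset.sum_nonneg fun _ _ => mul_nonneg (by positivity) (he _)

theorem rampSum_le_mul_sum (he : ∀ k, 0 ≤ e k) (k : ℕ) :
    rampSum e T k ≤ T * ∑ j ∈ Finset.range T, e (k + j) := by
  rw [rampSum, Finset.mul_sum]
  refine Finset.sum_le_sum fun j hj => mul_le_mul_of_nonneg_right ?_ (he _)
  exact_mod_cast Finset.mem_range.1 hj

theorem rampSum_le_of_forall_le (he : ∀ k, 0 ≤ e k) {k : ℕ} {C : ℝ}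
    (hC : ∀ j ∈ Finset.range T, e (k + j) ≤ C) : rampSum e T k ≤ T * (T * C) := by
  refine (rampSum_le_mul_sum he k).trans ?_
  gcongr
  simpa using Finset.sum_le_sum hC

theorem rampSum_succ (e : ℕ → ℝ) (T k : ℕ) :
    rampSum e T (k + 1) =
      rampSum e T k - ∑ j ∈ Finset.range T, e (k + j) + T * e (k + T) := by
  induction T with
  | zero => simp [rampSum]
  | succ T ih =>
    simp only [rampSum, Finset.sum_range_succ] at ih ⊢
    rw [ih, add_right_comm k 1 T, add_assoc k T 1]
    push_cast
    ring

theorem le_pow_mul_of_delayed_recursion {K : ℕ} {r c p q : ℝ} (he : ∀ k, 0 ≤ e k)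
    (hr0 : 0 ≤ r) (hr1 : r ≤ 1) (hc : 0 ≤ c) (hq : q ≤ (1 - r * T) * c) (hp : c * T ≤ p)
    (hrec : ∀ k, k + T < K → a (k + T + 1) ≤
      (1 - r) * a (k + T) - p * e (k + T) + q * ∑ j ∈ Finset.range T, e (k + j)) :
    ∀ k, k + T ≤ K → a (k + T) ≤ (1 - r) ^ k * (a T + c * rampSum e T 0) := by
  suffices hlyapunov : ∀ k, k + T ≤ K →
      a (k + T) + c * rampSum e T k ≤ (1 - r) ^ k * (a T + c * rampSum e T 0) from fun k hk =>
    (le_add_of_nonneg_right (mul_nonneg hc (rampSum_nonneg he k))).trans (hlyapunov k hk)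
  intro k
  induction k with
  | zero => simp
  | succ k ih =>
    intro hk
    set S := ∑ j ∈ Finset.range T, e (k + j)
    have hS0 : 0 ≤ S := Finset.sum_nonneg fun _ _ => he _
    have hcurrent : c * T * e (k + T) ≤ p * e (k + T) := mul_le_mul_of_nonneg_right hp (he _)
    have hpast : q * S ≤ (1 - r * T) * c * S := mul_le_mul_of_nonneg_right hq hS0
    have hramp : r * c * rampSum e T k ≤ r * c * (T * S) :=
      mul_le_mul_of_nonneg_left (rampSum_le_mul_sum he k) (mul_nonneg hr0 hc)
    calc a (k + 1 + T) + c * rampSum e T (k + 1)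
        = a (k + T + 1) + c * (rampSum e T k - S + T * e (k + T)) := by
          rw [add_right_comm, rampSum_succ]
      _ ≤ (1 - r) * (a (k + T) + c * rampSum e T k) := by linarith [hrec k (by omega)]
      _ ≤ (1 - r) * ((1 - r) ^ k * (a T + c * rampSum e T 0)) :=
          mul_le_mul_of_nonneg_left (ih (by omega)) (by linarith)
      _ = (1 - r) ^ (k + 1) * (a T + c * rampSum e T 0) := by ring

end Delay

section Sampling

variable {ι : Type*} {K : ℕ}

/-- Every index is sampled in each window of `τ` consecutive steps that precedes some step
`s + τ < K`. -/
def HitsEveryWindow (τ : ℕ) (ω : Fin K → ι) : Prop :=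
  ∀ s, s + τ < K → ∀ i, ∃ j : Fin K, s ≤ j ∧ j < s + τ ∧ ω j = i

theorem HitsEveryWindow.pos [Nonempty ι] {τ : ℕ} {ω : Fin K → ι} (hω : HitsEveryWindow τ ω)
    (hτK : τ < K) : 0 < τ := by
  obtain ⟨j, -, hj, -⟩ := hω 0 (by omega) (Classical.arbitrary ι)
  omega

variable [Fintype ι]

theorem card_filter_forall_ne {κ : Type*} [Fintype κ] [DecidableEq κ] (s : Finset κ) (i : ι)
    [DecidablePred fun ω : κ → ι => ∀ j ∈ s, ω j ≠ i] :
    (Finset.univ.filter fun ω : κ → ι => ∀ j ∈ s, ω j ≠ i).card =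
      (1 - 1 / (Fintype.card ι : ℝ)) ^ s.card * (Fintype.card ι : ℝ) ^ Fintype.card κ := by
  classical
  have : Nonempty ι := ⟨i⟩
  have hpi : (Finset.univ.filter fun ω : κ → ι => ∀ j ∈ s, ω j ≠ i) =
      Fintype.piFinset fun j => if j ∈ s then Finset.univ.erase i else Finset.univ := by
    ext ω
    simp only [Finset.mem_filter_univ, Fintype.mem_piFinset]
    refine forall_congr' fun j => ?_
    split_ifs with hj <;> simp [hj]
  have hfactor (j : κ) :
      ((if j ∈ s then Finset.univ.erase i else Finset.univ : Finset ι).card : ℝ) =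
        (if j ∈ s then 1 - 1 / (Fintype.card ι : ℝ) else 1) * Fintype.card ι := by
    split_ifs
    · rw [Finset.cast_card_erase_of_mem (Finset.mem_univ i), Finset.card_univ]
      field_simp
    · simp
  rw [hpi, Fintype.card_piFinset, Nat.cast_prod, Finset.prod_congr rfl fun j _ => hfactor j,
    Finset.prod_mul_distrib]
  simp

theorem one_sub_one_div_pow_le {N τ : ℕ} {M : ℝ} (hN : 1 ≤ N) (hM : 0 < M)
    (hτ : N * Real.log M ≤ τ) : (1 - 1 / (N : ℝ)) ^ τ ≤ 1 / M := by
  have hN0 : (0 : ℝ) < N := by exact_mod_cast hN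
  have hbase : 0 ≤ 1 - 1 / (N : ℝ) :=
    sub_nonneg.2 ((div_le_one hN0).2 (by exact_mod_cast hN))
  calc (1 - 1 / (N : ℝ)) ^ τ ≤ Real.exp (-(1 / N)) ^ τ := by
        gcongr; exact Real.one_sub_le_exp_neg _
    _ = Real.exp (-(τ / N)) := by rw [← Real.exp_nat_mul]; ring_nf
    _ ≤ Real.exp (-Real.log M) := by
        gcongr
        rwa [le_div_iff₀' hN0]
    _ = 1 / M := by rw [Real.exp_neg, Real.exp_log hM, one_div]

open Classical in
theorem card_filter_forall_window_ne_le [Nonempty ι] {τ s : ℕ} {M : ℝ} (hs : s + τ < K) (hM : 0 < M)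
    (hτ : Fintype.card ι * Real.log M ≤ τ) (i : ι) :
    ((Finset.univ.filter fun ω : Fin K → ι => ∀ j : Fin K, s ≤ j → j < s + τ → ω j ≠ i).card : ℝ)
      ≤ 1 / M * (Fintype.card ι : ℝ) ^ K := by
  let window : Finset (Fin K) :=
    (Finset.Ico s (s + τ)).attachFin fun j hj => (Finset.mem_Ico.1 hj).2.trans hs
  have hcard : window.card = τ := by simp [window]
  have hmiss : (Finset.univ.filter fun ω : Fin K → ι => ∀ j : Fin K, s ≤ j → j < s + τ → ω j ≠ i) =
      Finset.univ.filter fun ω => ∀ j ∈ window, ω j ≠ i := by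
    ext ω
    simp [window]
  rw [hmiss, card_filter_forall_ne, hcard, Fintype.card_fin]
  gcongr
  exact one_sub_one_div_pow_le Fintype.card_pos hM hτ

open Classical in
theorem card_filter_not_hitsEveryWindow_le [Nonempty ι] {τ : ℕ} {δ : ℝ} (hδ : 0 < δ)
    (hτ : Fintype.card ι * Real.log (Fintype.card ι * K / δ) ≤ τ) (hK : 0 < K) :
    ((Finset.univ.filter fun ω : Fin K → ι => ¬ HitsEveryWindow τ ω).card : ℝ)
      ≤ δ * (Fintype.card ι : ℝ) ^ K := by
  let missed : ℕ × ι → Finset (Fin K → ι) := fun p =>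
    Finset.univ.filter fun ω => ∀ j : Fin K, p.1 ≤ j → j < p.1 + τ → ω j ≠ p.2
  let windows : Finset (ℕ × ι) := Finset.range (K - τ) ×ˢ Finset.univ
  have mem_windows {p : ℕ × ι} : p ∈ windows ↔ p.1 + τ < K := by
    simp [windows, Nat.lt_sub_iff_add_lt]
  have hcover : (Finset.univ.filter fun ω : Fin K → ι => ¬ HitsEveryWindow τ ω) ⊆
      windows.biUnion missed := by
    intro ω hω
    simp only [HitsEveryWindow, Finset.mem_filter_univ, not_forall, not_exists, not_and] at hω
    obtain ⟨s, hs, i, hmiss⟩ := hω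
    exact Finset.mem_biUnion.2 ⟨(s, i), mem_windows.2 hs, by simpa [missed] using hmiss⟩
  have hmissed : ∀ p ∈ windows, ((missed p).card : ℝ) ≤
      1 / (Fintype.card ι * K / δ) * (Fintype.card ι : ℝ) ^ K := fun p hp =>
    card_filter_forall_window_ne_le (mem_windows.1 hp) (by positivity) hτ p.2
  have hwindows : (windows.card : ℝ) ≤ Fintype.card ι * K := by
    have : windows.card ≤ K * Fintype.card ι := by
      simpa [windows] using Nat.mul_le_mul_right _ (Nat.sub_le K τ)
    rw [mul_comm]
    exact_mod_cast this
  calc _ ≤ ((windows.biUnion missed).card : ℝ) := by exact_mod_cast Finset.card_le_card hcover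
    _ ≤ ∑ p ∈ windows, ((missed p).card : ℝ) := by exact_mod_cast Finset.card_biUnion_le
    _ ≤ windows.card * (1 / (Fintype.card ι * K / δ) * (Fintype.card ι : ℝ) ^ K) := by
        simpa using Finset.sum_le_sum hmissed
    _ ≤ Fintype.card ι * K * (1 / (Fintype.card ι * K / δ) * (Fintype.card ι : ℝ) ^ K) := by
        gcongr
    _ = δ * (Fintype.card ι : ℝ) ^ K := by field_simp

open Classical in
theorem one_sub_le_card_filter_div [Nonempty ι] {τ : ℕ} {δ : ℝ} (hδ : 0 < δ)
    (hτ : Fintype.card ι * Real.log (Fintype.card ι * K / δ) ≤ τ) (hK : 0 < K)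
    {P : (Fin K → ι) → Prop} (hP : ∀ ω, HitsEveryWindow τ ω → P ω) :
    1 - δ ≤ (Finset.univ.filter P).card / (Fintype.card ι : ℝ) ^ K := by
  have hcompl : (Finset.univ.filter fun ω => ¬ P ω).card ≤
      (Finset.univ.filter fun ω : Fin K → ι => ¬ HitsEveryWindow τ ω).card :=
    Finset.card_le_card (Finset.monotone_filter_right _ fun ω _ => mt (hP ω))
  have htotal : ((Finset.univ.filter P).card : ℝ) + (Finset.univ.filter fun ω => ¬ P ω).card =
      (Fintype.card ι : ℝ) ^ K := by
    exact_mod_cast (Finset.card_filter_add_card_filter_not P).trans (by simp)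
  rw [le_div_iff₀ (by positivity)]
  have hcompl' : ((Finset.univ.filter fun ω => ¬ P ω).card : ℝ) ≤ δ * (Fintype.card ι : ℝ) ^ K :=
    (Nat.cast_le.2 hcompl).trans (card_filter_not_hitsEveryWindow_le hδ hτ hK)
  linarith

end Sampling

section SAG

theorem one_add_pow_le_two {u : ℝ} {n : ℕ} (hu : 0 ≤ u) (hun : u * n ≤ Real.log 2) :
    (1 + u) ^ n ≤ 2 :=
  calc (1 + u) ^ n ≤ Real.exp u ^ n := by
        gcongr; linarith [Real.add_one_le_exp u]
    _ = Real.exp (u * n) := by rw [← Real.exp_nat_mul, mul_comm]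
    _ ≤ Real.exp (Real.log 2) := Real.exp_le_exp.2 hun
    _ = 2 := Real.exp_log two_pos

variable {E : Type*} [NormedAddCommGroup E] [InnerProductSpace ℝ E] [CompleteSpace E]
  {ι : Type*} [Fintype ι] [DecidableEq ι] {K : ℕ}

/-- `x`, `g` and `h` are the iterates, directions and stored gradients of `K` steps of SAG from the
origin with step size `α` on the components `fi`, where `ω k` is the index sampled at step `k`.
Nothing is required of `g k` for `k ≥ K`, nor of `x k` and `h i k` for `k > K`. -/
structure IsSAGRun (fi : ι → E → ℝ) (α : ℝ) (ω : Fin K → ι) (x g : ℕ → E) (h : ι → ℕ → E) :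
    Prop where
  iterate_zero : x 0 = 0
  memory_zero : ∀ i, h i 0 = 0
  memory_succ : ∀ (i : ι) (k : ℕ) (hk : k < K),
    h i (k + 1) = if ω ⟨k, hk⟩ = i then ∇ (fi i) (x k) else h i k
  direction_eq : ∀ (k : ℕ) (hk : k < K), g k = (Fintype.card ι : ℝ)⁻¹ • (∑ i, h i k)
    + (Fintype.card ι : ℝ)⁻¹ • (∇ (fi (ω ⟨k, hk⟩)) (x k) - h (ω ⟨k, hk⟩) k)
  iterate_succ : ∀ k, k < K → x (k + 1) = x k - α • g k

namespace IsSAGRun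

variable {fi : ι → E → ℝ} {α L μ B : ℝ} {ω : Fin K → ι} {x g : ℕ → E} {h : ι → ℕ → E}

theorem memory_of_eq (hrun : IsSAGRun fi α ω x g h) (k : Fin K) :
    h (ω k) (k + 1) = ∇ (fi (ω k)) (x k) :=
  (hrun.memory_succ _ k k.2).trans (if_pos rfl)

theorem memory_of_ne (hrun : IsSAGRun fi α ω x g h) (k : Fin K) {i : ι} (hi : ω k ≠ i) :
    h i (k + 1) = h i k :=
  (hrun.memory_succ i k k.2).trans (if_neg hi)

theorem direction_eq_average_memory (hrun : IsSAGRun fi α ω x g h) {k : ℕ} (hk : k < K) :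
    g k = (Fintype.card ι : ℝ)⁻¹ • ∑ i, h i (k + 1) := by
  -- The correction term of the direction is the change of the memory at the sampled index.
  have hrest : ∀ i ∈ Finset.univ, i ≠ ω ⟨k, hk⟩ → h i (k + 1) - h i k = 0 := fun i _ hi =>
    sub_eq_zero.2 (hrun.memory_of_ne ⟨k, hk⟩ hi.symm)
  have hchange : ∑ i, (h i (k + 1) - h i k) = ∇ (fi (ω ⟨k, hk⟩)) (x k) - h (ω ⟨k, hk⟩) k := by
    rw [Finset.sum_eq_single _ hrest (by simp), hrun.memory_of_eq ⟨k, hk⟩]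
  rw [hrun.direction_eq k hk, ← smul_add, ← hchange, Finset.sum_sub_distrib, add_sub_cancel]

theorem norm_memory_succ_le (hrun : IsSAGRun fi α ω x g h) {k : ℕ} (hk : k < K) {C : ℝ}
    (hgrad : ∀ i, ‖∇ (fi i) (x k)‖ ≤ C) (hmem : ∀ i, ‖h i k‖ ≤ C) (i : ι) :
    ‖h i (k + 1)‖ ≤ C := by
  by_cases hi : ω ⟨k, hk⟩ = i
  · subst hi
    exact (congrArg norm (hrun.memory_of_eq ⟨k, hk⟩)).trans_le (hgrad _)
  · exact (congrArg norm (hrun.memory_of_ne ⟨k, hk⟩ hi)).trans_le (hmem i)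

theorem norm_iterate_succ_le (hrun : IsSAGRun fi α ω x g h) (hα : 0 ≤ α) {k : ℕ} (hk : k < K) :
    ‖x (k + 1)‖ ≤ ‖x k‖ + α * ‖g k‖ := by
  rw [hrun.iterate_succ k hk]
  simpa [norm_smul, abs_of_nonneg hα] using norm_sub_le (x k) (α • g k)

theorem norm_iterate_add_le_and_norm_memory_le [Nonempty ι] (hrun : IsSAGRun fi α ω x g h)
    (hα : 0 ≤ α) (hL : 0 ≤ L) (hB : 0 ≤ B) (hgrad : ∀ i y, ‖∇ (fi i) y‖ ≤ L * (‖y‖ + B))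
    {k : ℕ} (hk : k ≤ K) :
    ‖x k‖ + B ≤ (1 + α * L) ^ k * B ∧ ∀ i, ‖h i k‖ ≤ L * ((1 + α * L) ^ k * B) := by
  induction k with
  | zero => simpa [hrun.iterate_zero, hrun.memory_zero] using mul_nonneg hL hB
  | succ k ih =>
    obtain ⟨hx, hmem⟩ := ih (by omega)
    have hmem' : ∀ i, ‖h i (k + 1)‖ ≤ L * ((1 + α * L) ^ k * B) :=
      hrun.norm_memory_succ_le hk
        (fun i => (hgrad i _).trans (mul_le_mul_of_nonneg_left hx hL)) hmem
    have hg : ‖g k‖ ≤ L * ((1 + α * L) ^ k * B) := by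
      rw [hrun.direction_eq_average_memory hk]
      exact norm_inv_card_smul_sum_le hmem'
    constructor
    · rw [pow_succ]
      linarith [hrun.norm_iterate_succ_le hα hk, mul_le_mul_of_nonneg_left hg hα]
    · refine fun i => (hmem' i).trans ?_
      gcongr
      · linarith [mul_nonneg hα hL]
      · omega

theorem norm_iterate_add_le_two_mul [Nonempty ι] (hrun : IsSAGRun fi α ω x g h)
    (hα : 0 ≤ α) (hL : 0 ≤ L) (hB : 0 ≤ B) (hgrad : ∀ i y, ‖∇ (fi i) y‖ ≤ L * (‖y‖ + B))
    {k : ℕ} (hk : k ≤ K) (hlog : α * L * k ≤ Real.log 2) : ‖x k‖ + B ≤ 2 * B :=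
  (hrun.norm_iterate_add_le_and_norm_memory_le hα hL hB hgrad hk).1.trans <|
    mul_le_mul_of_nonneg_right (one_add_pow_le_two (mul_nonneg hα hL) hlog) hB

theorem norm_direction_le_two_mul [Nonempty ι] (hrun : IsSAGRun fi α ω x g h)
    (hα : 0 ≤ α) (hL : 0 ≤ L) (hB : 0 ≤ B) (hgrad : ∀ i y, ‖∇ (fi i) y‖ ≤ L * (‖y‖ + B))
    {k : ℕ} (hk : k < K) (hlog : α * L * (k + 1 : ℕ) ≤ Real.log 2) : ‖g k‖ ≤ L * (2 * B) := by
  rw [hrun.direction_eq_average_memory hk]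
  refine norm_inv_card_smul_sum_le fun i =>
    ((hrun.norm_iterate_add_le_and_norm_memory_le hα hL hB hgrad hk).2 i).trans ?_
  gcongr
  exact one_add_pow_le_two (mul_nonneg hα hL) hlog

theorem exists_memory_eq_gradient (hrun : IsSAGRun fi α ω x g h) {i : ι} {j : Fin K}
    (hj : ω j = i) {k : ℕ} (hjk : j < k) (hk : k ≤ K) :
    ∃ l : ℕ, j ≤ l ∧ l < k ∧ h i k = ∇ (fi i) (x l) := by
  induction k, Nat.succ_le_of_lt hjk using Nat.le_induction with
  | base => exact ⟨j, le_rfl, hjk, hj ▸ hrun.memory_of_eq j⟩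
  | succ k hjk' ih =>
    by_cases hi : ω ⟨k, hk⟩ = i
    · exact ⟨k, by omega, by omega, hi ▸ hrun.memory_of_eq ⟨k, hk⟩⟩
    · obtain ⟨l, hjl, hlk, hl⟩ := ih hjk' (by omega)
      exact ⟨l, hjl, by omega, (hrun.memory_of_ne ⟨k, hk⟩ hi).trans hl⟩

theorem norm_iterate_sub_le (hrun : IsSAGRun fi α ω x g h) (hα : 0 ≤ α) {m n : ℕ} (hmn : m ≤ n)
    (hn : n ≤ K) : ‖x n - x m‖ ≤ α * ∑ j ∈ Finset.Ico m n, ‖g j‖ := by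
  rw [← dist_eq_norm', Finset.mul_sum]
  refine dist_le_Ico_sum_of_dist_le hmn fun {k} _ hk => ?_
  rw [hrun.iterate_succ k (hk.trans_le hn), dist_self_sub_right, norm_smul,
    Real.norm_of_nonneg hα]

variable {τ : ℕ}

theorem norm_gradient_sub_direction_le [Nonempty ι] (hrun : IsSAGRun fi α ω x g h)
    (hω : HitsEveryWindow τ ω) (hα : 0 ≤ α) (hL : 0 ≤ L)
    (hdiff : ∀ i, Differentiable ℝ (fi i))
    (hsmooth : ∀ i x y, ‖∇ (fi i) x - ∇ (fi i) y‖ ≤ L * ‖x - y‖) {k : ℕ} (hk : k + τ < K) :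
    ‖∇ (averageObjective fi) (x (k + τ)) - g (k + τ)‖ ≤
      L * (α * ∑ j ∈ Finset.Ico k (k + τ), ‖g j‖) := by
  rw [(hasGradientAt_averageObjective hdiff _).gradient, hrun.direction_eq_average_memory hk,
    ← smul_sub, ← Finset.sum_sub_distrib]
  refine norm_inv_card_smul_sum_le fun i => ?_
  obtain ⟨j, hkj, hjk, hj⟩ := hω k hk i
  obtain ⟨l, hjl, hlk, hl⟩ := hrun.exists_memory_eq_gradient hj (by omega) hk
  calc ‖∇ (fi i) (x (k + τ)) - h i (k + τ + 1)‖ ≤ L * ‖x (k + τ) - x l‖ := by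
        rw [hl]; exact hsmooth i _ _
    _ ≤ L * (α * ∑ j ∈ Finset.Ico l (k + τ), ‖g j‖) := by
        gcongr; exact hrun.norm_iterate_sub_le hα (by omega) hk.le
    _ ≤ L * (α * ∑ j ∈ Finset.Ico k (k + τ), ‖g j‖) := by
        gcongr; exact hkj.trans hjl

theorem norm_gradient_sub_direction_sq_le [Nonempty ι] (hrun : IsSAGRun fi α ω x g h)
    (hω : HitsEveryWindow τ ω) (hα : 0 ≤ α) (hL : 0 ≤ L)
    (hdiff : ∀ i, Differentiable ℝ (fi i))
    (hsmooth : ∀ i x y, ‖∇ (fi i) x - ∇ (fi i) y‖ ≤ L * ‖x - y‖) {k : ℕ} (hk : k + τ < K) :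
    ‖∇ (averageObjective fi) (x (k + τ)) - g (k + τ)‖ ^ 2 ≤
      (α * L) ^ 2 * (τ * ∑ j ∈ Finset.range τ, ‖g (k + j)‖ ^ 2) := by
  have hcauchy : (∑ j ∈ Finset.range τ, ‖g (k + j)‖) ^ 2 ≤
      τ * ∑ j ∈ Finset.range τ, ‖g (k + j)‖ ^ 2 := by
    simpa using sq_sum_le_card_mul_sum_sq (s := Finset.range τ) (f := fun j => ‖g (k + j)‖)
  have herr := hrun.norm_gradient_sub_direction_le hω hα hL hdiff hsmooth hk
  rw [Finset.sum_Ico_eq_sum_range, Nat.add_sub_cancel_left] at herr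
  calc _ ≤ (L * (α * ∑ j ∈ Finset.range τ, ‖g (k + j)‖)) ^ 2 := by gcongr
    _ = (α * L) ^ 2 * (∑ j ∈ Finset.range τ, ‖g (k + j)‖) ^ 2 := by ring
    _ ≤ _ := by gcongr

theorem averageObjective_succ_sub_le [Nonempty ι] (hrun : IsSAGRun fi α ω x g h)
    (hω : HitsEveryWindow τ ω) (hα : 0 ≤ α) (hL : 0 ≤ L) (hαL : α * L ≤ 1 / 2)
    (hdiff : ∀ i, Differentiable ℝ (fi i))
    (hsmooth : ∀ i x y, ‖∇ (fi i) x - ∇ (fi i) y‖ ≤ L * ‖x - y‖) {c : ℝ}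
    (hPL : ∀ y, 2 * μ * (averageObjective fi y - c) ≤ ‖∇ (averageObjective fi) y‖ ^ 2)
    {k : ℕ} (hk : k + τ < K) :
    averageObjective fi (x (k + τ + 1)) - c ≤
      (1 - α * μ) * (averageObjective fi (x (k + τ)) - c) - α / 4 * ‖g (k + τ)‖ ^ 2
        + α / 2 * (α * L) ^ 2 * τ * ∑ j ∈ Finset.range τ, ‖g (k + j)‖ ^ 2 := by
  have hstep := sub_smul_sub_le_of_PL (differentiable_averageObjective hdiff)
    (norm_gradient_averageObjective_sub_le hdiff hsmooth) hα _ (g (k + τ)) (hPL (x (k + τ)))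
  rw [← hrun.iterate_succ (k + τ) hk] at hstep
  have herr := mul_le_mul_of_nonneg_left
    (hrun.norm_gradient_sub_direction_sq_le hω hα hL hdiff hsmooth hk) (half_pos one_pos).le
  have hg : 0 ≤ α * ‖g (k + τ)‖ ^ 2 := by positivity
  linarith [mul_le_mul_of_nonneg_right hαL hg, mul_le_mul_of_nonneg_left herr hα]

theorem averageObjective_sub_le_pow_mul [Nonempty ι] (hrun : IsSAGRun fi α ω x g h)
    (hω : HitsEveryWindow τ ω) (hτK : τ < K) (hα : 0 ≤ α) (hμ : 0 ≤ μ) (hμL : μ ≤ L)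
    (hαL : α * L * τ ≤ 1 / 16) (hdiff : ∀ i, Differentiable ℝ (fi i))
    (hsmooth : ∀ i x y, ‖∇ (fi i) x - ∇ (fi i) y‖ ≤ L * ‖x - y‖) {c : ℝ}
    (hPL : ∀ y, 2 * μ * (averageObjective fi y - c) ≤ ‖∇ (averageObjective fi) y‖ ^ 2) :
    averageObjective fi (x K) - c ≤ (1 - α * μ) ^ (K - τ) *
      (averageObjective fi (x τ) - c + α / (4 * τ) * rampSum (fun k => ‖g k‖ ^ 2) τ 0) := by
  have hτ : (1 : ℝ) ≤ τ := by exact_mod_cast hω.pos hτK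
  have hL : 0 ≤ L := hμ.trans hμL
  have hαμ0 : 0 ≤ α * μ := by positivity
  have hαL1 : α * L ≤ 1 / 16 := (le_mul_of_one_le_right (by positivity) hτ).trans hαL
  have hαμ : α * μ ≤ α * L := by gcongr
  have hαμτ : α * μ * τ ≤ 1 / 16 := (by gcongr : α * μ * τ ≤ α * L * τ).trans hαL
  have hq : α / 2 * (α * L) ^ 2 * τ ≤ (1 - α * μ * τ) * (α / (4 * τ)) :=
    calc α / 2 * (α * L) ^ 2 * τ = 2 * (α * L * τ) ^ 2 * (α / (4 * τ)) := by field_simp; ring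
      _ ≤ (1 - α * μ * τ) * (α / (4 * τ)) := by
          gcongr
          nlinarith [show 0 ≤ α * L * τ by positivity]
  have hp : α / (4 * τ) * τ ≤ α / 4 := by field_simp; rfl
  have hdecay := le_pow_mul_of_delayed_recursion
    (a := fun k => averageObjective fi (x k) - c) (e := fun k => ‖g k‖ ^ 2)
    (fun _ => by positivity) hαμ0 (by linarith) (by positivity) hq hp
    (fun k hk => hrun.averageObjective_succ_sub_le hω hα hL (by linarith) hdiff hsmooth hPL hk)
    (K - τ) (by omega)
  rwa [Nat.sub_add_cancel hτK.le] at hdecay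

theorem lyapunov_warmup_le [Nonempty ι] (hrun : IsSAGRun fi α ω x g h) (hτ : 0 < τ) (hτK : τ < K)
    (hα : 0 ≤ α) (hL : 0 ≤ L) (hαL : α * L * τ ≤ 1 / 16)
    (hdiff : ∀ i, Differentiable ℝ (fi i))
    (hsmooth : ∀ i x y, ‖∇ (fi i) x - ∇ (fi i) y‖ ≤ L * ‖x - y‖)
    {xstar : E} (hxstar : ∇ (averageObjective fi) xstar = 0) (hxstarB : ‖xstar‖ ≤ B)
    {xistar : ι → E} (hxistar : ∀ i, ∇ (fi i) (xistar i) = 0) (hxistarB : ∀ i, ‖xistar i‖ ≤ B) :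
    averageObjective fi (x τ) - averageObjective fi xstar
      + α / (4 * τ) * rampSum (fun k => ‖g k‖ ^ 2) τ 0 ≤ 33 / 16 * L * B ^ 2 := by
  have hB : 0 ≤ B := (norm_nonneg _).trans hxstarB
  have hgrad (i : ι) := norm_gradient_le_of_gradient_eq_zero (hsmooth i) hL (hxistar i) (hxistarB i)
  have hlog {k : ℕ} (hk : k ≤ τ) : α * L * k ≤ Real.log 2 :=
    (by gcongr : α * L * k ≤ α * L * τ).trans (by linarith [Real.log_two_gt_d9])
  have hgap : averageObjective fi (x τ) - averageObjective fi xstar ≤ L / 2 * (2 * B) ^ 2 := by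
    refine (sub_le_of_lipschitz_gradient (differentiable_averageObjective hdiff)
      (norm_gradient_averageObjective_sub_le hdiff hsmooth) hxstar _).trans ?_
    gcongr
    linarith [norm_sub_le (x τ) xstar,
      hrun.norm_iterate_add_le_two_mul hα hL hB hgrad hτK.le (hlog le_rfl)]
  have hramp : rampSum (fun k => ‖g k‖ ^ 2) τ 0 ≤ τ * (τ * (L * (2 * B)) ^ 2) := by
    refine rampSum_le_of_forall_le (fun _ => by positivity) fun j hj => ?_
    have hjτ : j < τ := Finset.mem_range.1 hj
    rw [zero_add]
    gcongr
    exact hrun.norm_direction_le_two_mul hα hL hB hgrad (hjτ.trans hτK) (hlog hjτ)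
  have hmemory := mul_le_mul_of_nonneg_left hramp (show 0 ≤ α / (4 * τ) by positivity)
  have hconst : α / (4 * τ) * (τ * (τ * (L * (2 * B)) ^ 2)) = α * L * τ * (L * B ^ 2) := by
    field_simp
    ring
  linarith [mul_le_mul_of_nonneg_right hαL (show 0 ≤ L * B ^ 2 by positivity)]

theorem averageObjective_sub_le [Nonempty ι] (hrun : IsSAGRun fi α ω x g h)
    (hω : HitsEveryWindow τ ω) (hτK : τ < K) (hα : 0 ≤ α) (hμ : 0 ≤ μ) (hμL : μ ≤ L)
    (hαL : α * L * τ ≤ 1 / 16) (hdiff : ∀ i, Differentiable ℝ (fi i))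
    (hsmooth : ∀ i x y, ‖∇ (fi i) x - ∇ (fi i) y‖ ≤ L * ‖x - y‖)
    {xstar : E} (hxstar : ∇ (averageObjective fi) xstar = 0) (hxstarB : ‖xstar‖ ≤ B)
    (hPL : ∀ y, 2 * μ * (averageObjective fi y - averageObjective fi xstar) ≤
      ‖∇ (averageObjective fi) y‖ ^ 2)
    {xistar : ι → E} (hxistar : ∀ i, ∇ (fi i) (xistar i) = 0) (hxistarB : ∀ i, ‖xistar i‖ ≤ B) :
    averageObjective fi (x K) - averageObjective fi xstar ≤ 3 * L * B ^ 2 * (1 - α * μ) ^ K := by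
  have hτ : 0 < τ := hω.pos hτK
  have hL : 0 ≤ L := hμ.trans hμL
  have hαμτ : α * μ * τ ≤ 1 / 16 := (by gcongr : α * μ * τ ≤ α * L * τ).trans hαL
  have hαμ : α * μ ≤ 1 / 16 :=
    (le_mul_of_one_le_right (by positivity) (by exact_mod_cast hτ)).trans hαμτ
  -- The contraction starts only after `τ` steps; the `τ` missing factors cost at most `16 / 15`.
  have hbernoulli : 15 / 16 ≤ (1 - α * μ) ^ τ := by
    have := one_add_mul_le_pow (a := -(α * μ)) (by linarith) τ
    rw [← sub_eq_add_neg] at this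
    linarith
  have hLB : 0 ≤ L * B ^ 2 := by positivity
  have hrate : 0 ≤ (1 - α * μ) ^ (K - τ) := pow_nonneg (by linarith) _
  calc averageObjective fi (x K) - averageObjective fi xstar
      ≤ (1 - α * μ) ^ (K - τ) * (33 / 16 * L * B ^ 2) :=
        (hrun.averageObjective_sub_le_pow_mul hω hτK hα hμ hμL hαL hdiff hsmooth hPL).trans <|
          mul_le_mul_of_nonneg_left (hrun.lyapunov_warmup_le hτ hτK hα hL hαL hdiff hsmooth
            hxstar hxstarB hxistar hxistarB) hrate
    _ ≤ (1 - α * μ) ^ (K - τ) * (3 * L * B ^ 2 * (1 - α * μ) ^ τ) := by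
        refine mul_le_mul_of_nonneg_left ?_ hrate
        linarith [mul_le_mul_of_nonneg_left hbernoulli hLB]
    _ = 3 * L * B ^ 2 * (1 - α * μ) ^ K := by
        rw [mul_left_comm, ← pow_add, Nat.sub_add_cancel hτK.le]

end IsSAGRun

open Classical in
theorem sag_strongly_convex_high_prob_general [Nonempty ι] {fi : ι → E → ℝ} {L μ α B δ : ℝ}
    (hμ : 0 ≤ μ) (hμL : μ ≤ L) (hdiff : ∀ i, Differentiable ℝ (fi i))
    (hsmooth : ∀ i x y, ‖∇ (fi i) x - ∇ (fi i) y‖ ≤ L * ‖x - y‖)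
    {xstar : E} (hxstar : ∇ (averageObjective fi) xstar = 0)
    (hPL : ∀ y, 2 * μ * (averageObjective fi y - averageObjective fi xstar) ≤
      ‖∇ (averageObjective fi) y‖ ^ 2)
    {xistar : ι → E} (hxistar : ∀ i, ∇ (fi i) (xistar i) = 0)
    (hxstarB : ‖xstar‖ ≤ B) (hxistarB : ∀ i, ‖xistar i‖ ≤ B) (hδ : 0 < δ) {τ : ℕ}
    (hτ : Fintype.card ι * Real.log (Fintype.card ι * K / δ) ≤ τ) (hτK : τ < K)
    (hα : 0 ≤ α) (hαL : α * L * τ ≤ 1 / 16)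
    {x g : (Fin K → ι) → ℕ → E} {h : (Fin K → ι) → ι → ℕ → E}
    (hrun : ∀ ω, IsSAGRun fi α ω (x ω) (g ω) (h ω)) :
    1 - δ ≤ (Finset.univ.filter fun ω : Fin K → ι =>
      averageObjective fi (x ω K) - averageObjective fi xstar ≤
        3 * L * B ^ 2 * (1 - α * μ) ^ K).card / (Fintype.card ι : ℝ) ^ K :=
  one_sub_le_card_filter_div hδ hτ (by omega) fun ω hω =>
    (hrun ω).averageObjective_sub_le hω hτK hα hμ hμL hαL hdiff hsmooth
      hxstar hxstarB hPL hxistar hxistarB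

end SAG

section Parameters

theorem one_div_mul_mul_mul_le (L t : ℝ) : 1 / (16 * L * t) * L * t ≤ 1 / 16 :=
  calc 1 / (16 * L * t) * L * t = 1 / 16 * (L * t / (L * t)) := by
        simp only [div_eq_mul_inv, mul_inv]; ring
    _ ≤ 1 / 16 * 1 := by gcongr; exact div_self_le_one _
    _ = 1 / 16 := mul_one _

theorem three_mul_rate_pow_le_six_mul_rate_pow {L μ B : ℝ} (hμ : 0 < μ) (hμL : μ ≤ L) (τ K : ℕ) :
    3 * L * B ^ 2 * (1 - 1 / (16 * L * τ) * μ) ^ K ≤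
      6 * L * B ^ 2 * (1 - 1 / (64 * (τ : ℝ) * (L / μ))) ^ K := by
  have hL : 0 < L := hμ.trans_le hμL
  have hfour : 1 / (16 * L * τ) * μ = 4 * (1 / (64 * (τ : ℝ) * (L / μ))) := by
    simp only [div_eq_mul_inv, mul_inv, inv_inv]; ring
  have hrate0 : 0 ≤ 1 / (64 * (τ : ℝ) * (L / μ)) := by positivity
  have hrate1 : 1 / (16 * L * τ) * μ ≤ 1 := by
    rcases τ.eq_zero_or_pos with rfl | hτ
    · simp
    · have hτ1 : (1 : ℝ) ≤ τ := by exact_mod_cast hτ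
      rw [one_div_mul_eq_div, div_le_one (by positivity)]
      nlinarith
  have hLB : 0 ≤ L * B ^ 2 := by positivity
  exact mul_le_mul (by linarith) (pow_le_pow_left₀ (by linarith) (by linarith) K)
    (pow_nonneg (by linarith) K) (by linarith)

theorem mul_log_le_natCeil {N K : ℕ} {δ : ℝ} (hN : 1 ≤ N) (hK : 1 ≤ K) (hδ0 : 0 < δ)
    (hδ1 : δ ≤ 1) :
    N * Real.log (N * K / δ) ≤ ⌈8 * (N : ℝ) / 3 * Real.log (N * K / δ)⌉₊ := by
  have hM : 1 ≤ (N : ℝ) * K / δ := by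
    rw [le_div_iff₀ hδ0, one_mul]
    exact hδ1.trans (by exact_mod_cast Nat.mul_pos hN hK)
  have hlog : 0 ≤ N * Real.log (N * K / δ) := mul_nonneg N.cast_nonneg (Real.log_nonneg hM)
  exact le_trans (by linarith) (Nat.le_ceil _)

end Parameters

/- STATEMENT 14 (SAG, strongly convex case, high probability).
The i.i.d. uniform sampling sequence is modeled as `ω : Fin K → Fin N`, uniformly
distributed, so the probability of an event is its cardinality divided by `N ^ K`.
The trajectory `x ω`, direction `g ω`, and memory `h ω` are driven by the sample `ω`. -/
open Classical in
theorem sag_strongly_convex_high_prob (d N : ℕ) (hd : 1 ≤ d) (hN : 1 ≤ N)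
    (L μ : ℝ) (hL : 0 < L) (hμ : 0 < μ)
    (fi : Fin N → EuclideanSpace ℝ (Fin d) → ℝ)
    (hdiff : ∀ i, Differentiable ℝ (fi i))
    (hsmooth : ∀ i x y, ‖gradient (fi i) x - gradient (fi i) y‖ ≤ L * ‖x - y‖)
    (f : EuclideanSpace ℝ (Fin d) → ℝ)
    (hf : ∀ z, f z = (∑ i, fi i z) / N)
    (hsc : ∀ y z, f y + ⟪gradient f y, z - y⟫ + μ / 2 * ‖z - y‖ ^ 2 ≤ f z)
    (xstar : EuclideanSpace ℝ (Fin d)) (hmin : ∀ y, f xstar ≤ f y)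
    (xistar : Fin N → EuclideanSpace ℝ (Fin d))
    (hxi : ∀ i y, fi i (xistar i) ≤ fi i y)
    (B : ℝ) (hB : B = max ‖xstar‖ (⨆ i, ‖xistar i‖))
    (κ : ℝ) (hκ : κ = L / μ)
    (K : ℕ) (hK1 : 1 ≤ K) (δ : ℝ) (hδ0 : 0 < δ) (hδ1 : δ < 1)
    (τ : ℕ) (hτ : τ = ⌈(8 * (N : ℝ) / 3) * Real.log ((N : ℝ) * K / δ)⌉₊)
    (α : ℝ) (hα : α = 1 / (16 * L * τ))
    (hKτ : τ < K)
    (x g : (Fin K → Fin N) → ℕ → EuclideanSpace ℝ (Fin d))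
    (h : (Fin K → Fin N) → Fin N → ℕ → EuclideanSpace ℝ (Fin d))
    (hx0 : ∀ ω, x ω 0 = 0)
    (hh0 : ∀ ω i, h ω i 0 = 0)
    (hhrec : ∀ ω (i : Fin N) (k : ℕ) (hk : k < K),
      h ω i (k + 1) = if ω ⟨k, hk⟩ = i then gradient (fi i) (x ω k) else h ω i k)
    (hg : ∀ ω (k : ℕ) (hk : k < K),
      g ω k = (N : ℝ)⁻¹ • (∑ i, h ω i k)
        + (N : ℝ)⁻¹ • (gradient (fi (ω ⟨k, hk⟩)) (x ω k) - h ω (ω ⟨k, hk⟩) k))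
    (hxrec : ∀ ω (k : ℕ), k < K → x ω (k + 1) = x ω k - α • g ω k) :
    1 - δ ≤
      (Finset.univ.filter (fun ω : Fin K → Fin N =>
          f (x ω K) - f xstar ≤
            6 * L * B ^ 2 * (1 - 1 / (64 * (τ : ℝ) * κ)) ^ K)).card / (N : ℝ) ^ K := by
  subst hκ hα
  have : Nonempty (Fin N) := ⟨⟨0, hN⟩⟩
  have : Nonempty (Fin d) := ⟨⟨0, hd⟩⟩
  obtain rfl : f = averageObjective fi := funext fun z => by simp [averageObjective, hf]
  have hμL : μ ≤ L := strongConvexity_le_smoothness (differentiable_averageObjective hdiff)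
    (norm_gradient_averageObjective_sub_le hdiff hsmooth) hsc
  have hxistarB (i : Fin N) : ‖xistar i‖ ≤ B :=
    hB ▸ le_max_of_le_right (le_ciSup (Set.finite_range fun i => ‖xistar i‖).bddAbove i)
  have hprob := sag_strongly_convex_high_prob_general hμ.le hμL hdiff hsmooth
    (gradient_eq_zero_of_forall_le hmin)
    (fun y => two_mul_mul_sub_le_norm_gradient_sq hμ.le (hsc y xstar))
    (fun i => gradient_eq_zero_of_forall_le (hxi i)) (hB ▸ le_max_left _ _) hxistarB hδ0
    (by simpa [hτ] using mul_log_le_natCeil hN hK1 hδ0 hδ1.le) hKτ (by positivity)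
    (one_div_mul_mul_mul_le L τ)
    fun ω => ⟨hx0 ω, hh0 ω, hhrec ω, by simpa using hg ω, hxrec ω⟩
  rw [Fintype.card_fin] at hprob
  refine hprob.trans (div_le_div_of_nonneg_right (Nat.cast_le.2 ?_) (by positivity))
  exact Finset.card_le_card <| Finset.monotone_filter_right _ fun ω _ hω =>
    hω.trans (three_mul_rate_pow_le_six_mul_rate_pow hμ hμL τ K)
end

section
/- (Non-convex one-step Lyapunov descent.) Fix integers τ ≥ 1 and K > τ + 1, and set α = 1/(16 L τ). If the sampling sequence has staleness bounded by τ up to horizon K, then, without any convexity assumption on f, the SAG Lyapunov function satisfies V_{k+1} ≤ V_k − (α/8)·‖∇f(x_k)‖² for every k with τ ≤ k ≤ K−2. -/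
/-!
By smoothness, a step along an inexact gradient `g` decreases the objective by
`α / 2 * ‖∇ F x‖ ^ 2 + α / 2 * (1 - L * α) * ‖g‖ ^ 2`, up to the error `α / 2 * ‖∇ F x - g‖ ^ 2`.
The SAG direction is the average of gradients taken at most `τ` steps ago, so its error is
controlled by how far the iterates travelled meanwhile, that is, by the sum of `‖g i‖ ^ 2` over the
last `τ` steps. Moving the window of the Lyapunov function by one step releases exactly this sum, at
the price of `τ * ‖g k‖ ^ 2`, which the term `-α / 2 * (1 - L * α) * ‖g k‖ ^ 2` pays for as soon as
`3 * L * τ * α ≤ 1`.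
-/

open Finset
open scoped Gradient NNReal

section Smooth

variable {E : Type*} [NormedAddCommGroup E] [InnerProductSpace ℝ E] [CompleteSpace E]
  {F : E → ℝ} {L : ℝ≥0}

theorem hasDerivAt_comp_line (hF : Differentiable ℝ F) (x v : E) (t : ℝ) :
    HasDerivAt (fun t : ℝ => F (x + t • v)) (inner ℝ (∇ F (x + t • v)) v) t := by
  have hline : HasDerivAt (fun t : ℝ => x + t • v) v t := by
    simpa using ((hasDerivAt_id t).smul_const v).const_add x
  rw [inner_gradient_left]
  exact (hF _).hasFDerivAt.comp_hasDerivAt t hline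

theorem inner_gradient_add_smul_le (hlip : LipschitzWith L (∇ F)) (x v : E) {t : ℝ} (ht : 0 ≤ t) :
    inner ℝ (∇ F (x + t • v)) v ≤ inner ℝ (∇ F x) v + L * ‖v‖ ^ 2 * t := by
  have hgrad : ‖∇ F (x + t • v) - ∇ F x‖ ≤ L * (t * ‖v‖) := by
    simpa [norm_smul, abs_of_nonneg ht] using hlip.norm_sub_le (x + t • v) x
  calc inner ℝ (∇ F (x + t • v)) v
      = inner ℝ (∇ F x) v + inner ℝ (∇ F (x + t • v) - ∇ F x) v := by rw [inner_sub_left]; ring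
    _ ≤ inner ℝ (∇ F x) v + ‖∇ F (x + t • v) - ∇ F x‖ * ‖v‖ := by
        gcongr; exact real_inner_le_norm _ _
    _ ≤ inner ℝ (∇ F x) v + L * (t * ‖v‖) * ‖v‖ := by gcongr
    _ = inner ℝ (∇ F x) v + L * ‖v‖ ^ 2 * t := by ring

theorem le_quadratic_of_lipschitzWith_gradient (hF : Differentiable ℝ F)
    (hlip : LipschitzWith L (∇ F)) (x v : E) :
    F (x + v) ≤ F x + inner ℝ (∇ F x) v + L / 2 * ‖v‖ ^ 2 := by
  have hquad (t : ℝ) : HasDerivAt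
      (fun t : ℝ => F x + inner ℝ (∇ F x) v * t + L / 2 * ‖v‖ ^ 2 * t ^ 2)
      (inner ℝ (∇ F x) v + L * ‖v‖ ^ 2 * t) t := by
    refine ((((hasDerivAt_id' t).const_mul (inner ℝ (∇ F x) v)).const_add (F x)).add
      ((hasDerivAt_pow 2 t).const_mul (L / 2 * ‖v‖ ^ 2))).congr_deriv ?_
    norm_num
    ring
  have hle := image_le_of_deriv_right_le_deriv_boundary (a := 0) (b := 1)
    (fun t _ => (hasDerivAt_comp_line hF x v t).continuousAt.continuousWithinAt)
    (fun t _ => (hasDerivAt_comp_line hF x v t).hasDerivWithinAt) (by simp)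
    (fun t _ => (hquad t).continuousAt.continuousWithinAt)
    (fun t _ => (hquad t).hasDerivWithinAt)
    (fun t ht => inner_gradient_add_smul_le hlip x v ht.1)
  simpa using hle (Set.right_mem_Icc.2 zero_le_one)

theorem inexact_gradient_step_le (hF : Differentiable ℝ F) (hlip : LipschitzWith L (∇ F))
    (x g : E) (α : ℝ) :
    F (x - α • g) ≤ F x - α / 2 * ‖∇ F x‖ ^ 2 - α / 2 * (1 - L * α) * ‖g‖ ^ 2
      + α / 2 * ‖∇ F x - g‖ ^ 2 := by
  have hdescent := le_quadratic_of_lipschitzWith_gradient hF hlip x (-(α • g))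
  rw [← sub_eq_add_neg, inner_neg_right, inner_smul_right, norm_neg, norm_smul, mul_pow,
    Real.norm_eq_abs, sq_abs] at hdescent
  rw [norm_sub_sq_real]
  linarith

end Smooth

section UniformMean

variable {ι : Type*} [Fintype ι]

/-- The uniform average of a finite family of vectors; over an empty index type it is `0`. -/
noncomputable def uniformMean {M : Type*} [AddCommMonoid M] [Module ℝ M] (w : ι → M) : M :=
  (Fintype.card ι : ℝ)⁻¹ • ∑ i, w i

theorem uniformMean_sub {M : Type*} [AddCommGroup M] [Module ℝ M] (v w : ι → M) :
    uniformMean v - uniformMean w = uniformMean fun i => v i - w i := by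
  simp only [uniformMean, sum_sub_distrib, smul_sub]

theorem uniformMean_apply {X M : Type*} [AddCommMonoid M] [Module ℝ M] (w : ι → X → M) (z : X) :
    uniformMean w z = uniformMean fun i => w i z := by
  simp only [uniformMean, Pi.smul_apply, Finset.sum_apply]

theorem norm_uniformMean_le {E : Type*} [SeminormedAddCommGroup E] [NormedSpace ℝ E] {w : ι → E}
    {B : ℝ} (hB : 0 ≤ B) (hw : ∀ i, ‖w i‖ ≤ B) : ‖uniformMean w‖ ≤ B := by
  have hsum : ‖∑ i, w i‖ ≤ Fintype.card ι * B := by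
    simpa using norm_sum_le_of_le univ fun i _ => hw i
  simpa [uniformMean, norm_smul] using
    inv_mul_le_of_le_mul₀ (Nat.cast_nonneg (Fintype.card ι)) hB hsum

theorem lipschitzWith_uniformMean {X E : Type*} [PseudoMetricSpace X] [SeminormedAddCommGroup E]
    [NormedSpace ℝ E] {L : ℝ≥0} {G : ι → X → E} (hG : ∀ i, LipschitzWith L (G i)) :
    LipschitzWith L (uniformMean G) := by
  refine LipschitzWith.of_dist_le_mul fun y z => ?_
  rw [dist_eq_norm, uniformMean_apply, uniformMean_apply, uniformMean_sub]
  refine norm_uniformMean_le (by positivity) fun i => ?_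
  simpa only [dist_eq_norm] using (hG i).dist_le_mul y z

variable {E : Type*} [NormedAddCommGroup E] [InnerProductSpace ℝ E] [CompleteSpace E]

theorem hasGradientAt_uniformMean {f : ι → E → ℝ} {f' : ι → E} {z : E}
    (hf : ∀ i, HasGradientAt (f i) (f' i) z) :
    HasGradientAt (uniformMean f) (uniformMean f') z := by
  rw [hasGradientAt_iff_hasFDerivAt, uniformMean, uniformMean, map_smulₛₗ, map_sum]
  exact (HasFDerivAt.sum fun i _ => (hf i).hasFDerivAt).const_smul (Fintype.card ι : ℝ)⁻¹

theorem differentiable_uniformMean {f : ι → E → ℝ} (hf : ∀ i, Differentiable ℝ (f i)) :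
    Differentiable ℝ (uniformMean f) :=
  fun z => (hasGradientAt_uniformMean fun i => (hf i z).hasGradientAt).differentiableAt

theorem gradient_uniformMean {f : ι → E → ℝ} (hf : ∀ i, Differentiable ℝ (f i)) :
    ∇ (uniformMean f) = uniformMean fun i => ∇ (f i) :=
  gradient_eq fun z => by
    rw [uniformMean_apply]
    exact hasGradientAt_uniformMean fun i => (hf i z).hasGradientAt

end UniformMean

section WeightedWindow

/-- The triangularly weighted sum `W_k = ∑_{j = 1}^τ (τ - j + 1) a_{k - j}` of the last `τ` terms of
a sequence. The subtraction `k - j` truncates at `0`, so the notion is meant for `τ ≤ k`. -/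
def weightedWindow (a : ℕ → ℝ) (τ k : ℕ) : ℝ :=
  ∑ j ∈ Icc 1 τ, ((τ : ℝ) - j + 1) * a (k - j)

theorem weightedWindow_eq_sum_Ico (a : ℕ → ℝ) {τ k : ℕ} (hτ : τ ≤ k) :
    weightedWindow a τ k = ∑ i ∈ Ico (k - τ) k, ((τ : ℝ) + i - k + 1) * a i := by
  have hreflect := sum_Ico_reflect (fun i : ℕ => ((τ : ℝ) + i - k + 1) * a i) 1
    (Nat.add_le_add_right hτ 1)
  simp only [Nat.add_sub_add_right, Nat.add_sub_cancel] at hreflect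
  rw [← hreflect]
  refine sum_congr rfl fun j hj => ?_
  have hjk : j ≤ k := (mem_Icc.1 hj).2.trans hτ
  rw [Nat.cast_sub hjk]
  ring

theorem weightedWindow_succ (a : ℕ → ℝ) {τ k : ℕ} (hτ : τ ≤ k) :
    weightedWindow a τ (k + 1) = weightedWindow a τ k + τ * a k - ∑ i ∈ Ico (k - τ) k, a i := by
  have hdrop : ∑ i ∈ Ico (k - τ) (k + 1), ((τ : ℝ) + i - k) * a i =
      ∑ i ∈ Ico (k + 1 - τ) (k + 1), ((τ : ℝ) + i - k) * a i := by
    rw [sum_eq_sum_Ico_succ_bot (by omega), Nat.cast_sub hτ, ← Nat.sub_add_comm hτ]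
    ring
  calc weightedWindow a τ (k + 1)
      = ∑ i ∈ Ico (k - τ) (k + 1), ((τ : ℝ) + i - k) * a i := by
        rw [weightedWindow_eq_sum_Ico a (Nat.le_add_right_of_le hτ), hdrop]
        refine sum_congr rfl fun i _ => ?_
        push_cast
        ring
    _ = ∑ i ∈ Ico (k - τ) k, (((τ : ℝ) + i - k + 1) * a i - a i) + τ * a k := by
        rw [sum_Ico_succ_top (k.sub_le τ), add_sub_cancel_right]
        congr 1
        exact sum_congr rfl fun i _ => by ring
    _ = weightedWindow a τ k + τ * a k - ∑ i ∈ Ico (k - τ) k, a i := by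
        rw [sum_sub_distrib, weightedWindow_eq_sum_Ico a hτ]
        ring

end WeightedWindow

section SAG

variable {ι E : Type*}

/-- The staleness of the index sequence `idx` is bounded by `τ` up to the horizon `K`: at every time
`τ ≤ k < K`, each index was sampled during the last `τ` steps. -/
def BoundedStaleness (idx : ℕ → ι) (τ K : ℕ) : Prop :=
  ∀ i k, τ ≤ k → k < K → ∃ j, k ≤ j + τ ∧ j < k ∧ idx j = i

theorem BoundedStaleness.pos {idx : ℕ → ι} {τ K : ℕ} (hstale : BoundedStaleness idx τ K)
    (hτK : τ < K) : 0 < τ := by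
  obtain ⟨j, -, hj, -⟩ := hstale (idx 0) τ le_rfl hτK
  exact hj.pos

variable [Fintype ι] [DecidableEq ι]

/-- A run of SAG with step size `α` on the maps `G i` (the gradients of the components), sampled
along `idx`: `x` are the iterates, `g` the directions and `h i k` is the value stored for component
`i` before step `k`. Both the starting point and the initial table are arbitrary. -/
structure IsSAGRun_s16 [AddCommGroup E] [Module ℝ E] (G : ι → E → E) (idx : ℕ → ι) (α : ℝ)
    (x g : ℕ → E) (h : ι → ℕ → E) : Prop where
  table_succ : ∀ i k, h i (k + 1) = if idx k = i then G i (x k) else h i k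
  direction : ∀ k, g k = (Fintype.card ι : ℝ)⁻¹ • (∑ i, h i k)
    + (Fintype.card ι : ℝ)⁻¹ • (G (idx k) (x k) - h (idx k) k)
  iterate_succ : ∀ k, x (k + 1) = x k - α • g k

/-- The SAG Lyapunov function `V_k = F (x_k) - c + L α² W_k` of an objective `F`, with `W_k` built
from `‖g_i‖ ^ 2`. The reference value `c` plays the role of the minimum of `F`. -/
noncomputable def sagLyapunov [NormedAddCommGroup E] (F : E → ℝ) (c L α : ℝ) (τ : ℕ)
    (x g : ℕ → E) (k : ℕ) : ℝ :=
  F (x k) - c + L * α ^ 2 * weightedWindow (fun i => ‖g i‖ ^ 2) τ k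

namespace IsSAGRun_s16

section Module

variable [AddCommGroup E] [Module ℝ E] {G : ι → E → E} {idx : ℕ → ι} {α : ℝ} {x g : ℕ → E}
  {h : ι → ℕ → E}

theorem direction_eq_uniformMean (hrun : IsSAGRun_s16 G idx α x g h) (k : ℕ) :
    g k = uniformMean fun i => h i (k + 1) := by
  have hupdate (i : ι) : h i (k + 1) = h i k + if idx k = i then G i (x k) - h i k else 0 := by
    rw [hrun.table_succ]
    split_ifs <;> simp
  simp [uniformMean, hrun.direction, hupdate, sum_add_distrib]

theorem exists_table_eq (hrun : IsSAGRun_s16 G idx α x g h) {j n : ℕ} (hjn : j < n) :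
    ∃ m, j ≤ m ∧ m < n ∧ h (idx j) n = G (idx j) (x m) := by
  induction n, hjn using Nat.le_induction with
  | base => exact ⟨j, le_rfl, j.lt_succ_self, by rw [hrun.table_succ, if_pos rfl]⟩
  | succ n hjn ih =>
    by_cases hidx : idx n = idx j
    · exact ⟨n, by omega, n.lt_succ_self, by rw [hrun.table_succ, if_pos hidx]⟩
    · obtain ⟨m, hjm, hmn, hm⟩ := ih
      exact ⟨m, hjm, hmn.trans n.lt_succ_self, by rw [hrun.table_succ, if_neg hidx, hm]⟩

end Module

section Normed

variable [NormedAddCommGroup E] [NormedSpace ℝ E] {G : ι → E → E} {idx : ℕ → ι} {α : ℝ}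
  {x g : ℕ → E} {h : ι → ℕ → E} {L : ℝ≥0} {τ K k : ℕ}

theorem norm_iterate_sub_le_s16 (hrun : IsSAGRun_s16 G idx α x g h) {m : ℕ} (hmk : m ≤ k) :
    ‖x k - x m‖ ≤ |α| * ∑ i ∈ Ico m k, ‖g i‖ := by
  rw [← dist_eq_norm, dist_comm, mul_sum]
  refine dist_le_Ico_sum_of_dist_le hmk fun {i} _ _ => ?_
  rw [dist_eq_norm, hrun.iterate_succ, sub_sub_cancel, norm_smul, Real.norm_eq_abs]

theorem norm_sub_table_le (hrun : IsSAGRun_s16 G idx α x g h) (hG : ∀ i, LipschitzWith L (G i))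
    (hstale : BoundedStaleness idx τ K) (hτk : τ ≤ k) (hkK : k + 1 < K) (i : ι) :
    ‖G i (x k) - h i (k + 1)‖ ≤ L * (|α| * ∑ n ∈ Ico (k - τ) k, ‖g n‖) := by
  obtain ⟨j, hjτ, hjk, rfl⟩ := hstale i (k + 1) (by omega) hkK
  obtain ⟨m, hjm, hmk, hm⟩ := hrun.exists_table_eq hjk
  rw [hm]
  calc ‖G (idx j) (x k) - G (idx j) (x m)‖
      ≤ L * ‖x k - x m‖ := (hG _).norm_sub_le _ _
    _ ≤ L * (|α| * ∑ n ∈ Ico m k, ‖g n‖) := by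
        gcongr; exact hrun.norm_iterate_sub_le_s16 (Nat.lt_succ_iff.1 hmk)
    _ ≤ L * (|α| * ∑ n ∈ Ico (k - τ) k, ‖g n‖) := by gcongr; omega

theorem norm_uniformMean_sub_direction_sq_le (hrun : IsSAGRun_s16 G idx α x g h)
    (hG : ∀ i, LipschitzWith L (G i)) (hstale : BoundedStaleness idx τ K) (hτk : τ ≤ k)
    (hkK : k + 1 < K) :
    ‖uniformMean G (x k) - g k‖ ^ 2 ≤
      L ^ 2 * α ^ 2 * (τ * ∑ n ∈ Ico (k - τ) k, ‖g n‖ ^ 2) := by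
  have herror : ‖uniformMean G (x k) - g k‖ ≤
      L * (|α| * ∑ n ∈ Ico (k - τ) k, ‖g n‖) := by
    rw [hrun.direction_eq_uniformMean, uniformMean_apply, uniformMean_sub]
    exact norm_uniformMean_le (by positivity) (hrun.norm_sub_table_le hG hstale hτk hkK)
  have hcauchy : (∑ n ∈ Ico (k - τ) k, ‖g n‖) ^ 2 ≤ τ * ∑ n ∈ Ico (k - τ) k, ‖g n‖ ^ 2 := by
    simpa [Nat.sub_sub_self hτk] using
      sq_sum_le_card_mul_sum_sq (s := Ico (k - τ) k) (f := fun n => ‖g n‖)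
  calc ‖uniformMean G (x k) - g k‖ ^ 2
      ≤ (L * (|α| * ∑ n ∈ Ico (k - τ) k, ‖g n‖)) ^ 2 := by gcongr
    _ = L ^ 2 * α ^ 2 * (∑ n ∈ Ico (k - τ) k, ‖g n‖) ^ 2 := by
        rw [mul_pow, mul_pow, sq_abs, mul_assoc]
    _ ≤ L ^ 2 * α ^ 2 * (τ * ∑ n ∈ Ico (k - τ) k, ‖g n‖ ^ 2) := by gcongr

end Normed

end IsSAGRun_s16

theorem sag_nonconvex_descent_general [NormedAddCommGroup E] [InnerProductSpace ℝ E]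
    [CompleteSpace E] {f : ι → E → ℝ} {L : ℝ≥0} {idx : ℕ → ι} {α : ℝ} {x g : ℕ → E}
    {h : ι → ℕ → E} {τ K k : ℕ} (hf : ∀ i, Differentiable ℝ (f i))
    (hlip : ∀ i, LipschitzWith L (∇ (f i))) (hrun : IsSAGRun_s16 (fun i => ∇ (f i)) idx α x g h)
    (hstale : BoundedStaleness idx τ K) (hα : 0 ≤ α) (hstep : 3 * L * τ * α ≤ 1) (c : ℝ)
    (hτk : τ ≤ k) (hkK : k + 1 < K) :
    sagLyapunov (uniformMean f) c L α τ x g (k + 1) ≤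
      sagLyapunov (uniformMean f) c L α τ x g k - α / 2 * ‖∇ (uniformMean f) (x k)‖ ^ 2 := by
  have hlip_mean : LipschitzWith L (∇ (uniformMean f)) :=
    gradient_uniformMean hf ▸ lipschitzWith_uniformMean hlip
  have hstep_le := inexact_gradient_step_le (differentiable_uniformMean hf) hlip_mean (x k) (g k) α
  have herror := hrun.norm_uniformMean_sub_direction_sq_le hlip hstale hτk hkK
  rw [← gradient_uniformMean hf] at herror
  have hτ : (1 : ℝ) ≤ τ := by exact_mod_cast hstale.pos (by omega)
  set A : ℝ := ∑ n ∈ Ico (k - τ) k, ‖g n‖ ^ 2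
  have hA : 0 ≤ A := sum_nonneg fun n _ => sq_nonneg ‖g n‖
  have herror_le : α / 2 * ‖∇ (uniformMean f) (x k) - g k‖ ^ 2 ≤ L * α ^ 2 * A := by
    calc α / 2 * ‖∇ (uniformMean f) (x k) - g k‖ ^ 2
        ≤ α / 2 * (L ^ 2 * α ^ 2 * (τ * A)) := by gcongr
      _ = L * α ^ 2 * A * (3 * L * τ * α / 6) := by ring
      _ ≤ L * α ^ 2 * A := mul_le_of_le_one_right (mul_nonneg (by positivity) hA) (by linarith)
  have hdirection_le : L * α ^ 2 * (τ * ‖g k‖ ^ 2) ≤ α / 2 * (1 - L * α) * ‖g k‖ ^ 2 := by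
    have hLα : L * α ≤ L * α * τ := le_mul_of_one_le_right (by positivity) hτ
    calc L * α ^ 2 * (τ * ‖g k‖ ^ 2) = α * (L * α * τ) * ‖g k‖ ^ 2 := by ring
      _ ≤ α * ((1 - L * α) / 2) * ‖g k‖ ^ 2 := by gcongr; linarith
      _ = α / 2 * (1 - L * α) * ‖g k‖ ^ 2 := by ring
  simp only [sagLyapunov, weightedWindow_succ _ hτk, hrun.iterate_succ k]
  linarith

end SAG

/- STATEMENT 16 (SAG non-convex one-step Lyapunov descent). -/
theorem sag_nonconvex_descent (d N : ℕ) (hd : 1 ≤ d) (hN : 1 ≤ N)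
    (L : ℝ) (hL : 0 < L)
    (fi : Fin N → EuclideanSpace ℝ (Fin d) → ℝ)
    (hdiff : ∀ i, Differentiable ℝ (fi i))
    (hsmooth : ∀ i x y, ‖gradient (fi i) x - gradient (fi i) y‖ ≤ L * ‖x - y‖)
    (f : EuclideanSpace ℝ (Fin d) → ℝ)
    (hf : ∀ z, f z = (∑ i, fi i z) / N)
    (xstar : EuclideanSpace ℝ (Fin d)) (hmin : ∀ y, f xstar ≤ f y)
    (τ K : ℕ) (hτ : 1 ≤ τ) (hK : τ + 1 < K)
    (idx : ℕ → Fin N) (α : ℝ) (hα : α = 1 / (16 * L * τ))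
    (x g : ℕ → EuclideanSpace ℝ (Fin d))
    (h : Fin N → ℕ → EuclideanSpace ℝ (Fin d))
    (hx0 : x 0 = 0)
    (hh0 : ∀ i, h i 0 = 0)
    (hhrec : ∀ i k, h i (k + 1) = if idx k = i then gradient (fi i) (x k) else h i k)
    (hg : ∀ k, g k = (N : ℝ)⁻¹ • (∑ i, h i k)
      + (N : ℝ)⁻¹ • (gradient (fi (idx k)) (x k) - h (idx k) k))
    (hxrec : ∀ k, x (k + 1) = x k - α • g k)
    (hstale : ∀ i : Fin N, ∀ k : ℕ, τ ≤ k → k ≤ K - 1 →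
      ∃ j : ℕ, k - τ ≤ j ∧ j < k ∧ idx j = i)
    (V : ℕ → ℝ)
    (hV : ∀ k, V k = f (x k) - f xstar
      + L * α ^ 2 * ∑ j ∈ Finset.Icc 1 τ, ((τ : ℝ) - j + 1) * ‖g (k - j)‖ ^ 2) :
    ∀ k : ℕ, τ ≤ k → k ≤ K - 2 →
      V (k + 1) ≤ V k - (α / 8) * ‖gradient f (x k)‖ ^ 2 := by
  intro k hτk hkK
  lift L to NNReal using hL.le
  obtain rfl : f = uniformMean fi := funext fun z => by simp [hf, uniformMean, div_eq_inv_mul]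
  obtain rfl : V = sagLyapunov (uniformMean fi) (uniformMean fi xstar) L α τ x g := funext hV
  have hα0 : 0 ≤ α := by rw [hα]; positivity
  have hstep : 3 * L * τ * α ≤ 1 := by
    have hτ0 : (τ : ℝ) ≠ 0 := by positivity
    rw [hα]
    field_simp
    norm_num
  have hrun : IsSAGRun_s16 (fun i => gradient (fi i)) idx α x g h :=
    ⟨hhrec, by simpa using hg, hxrec⟩
  have hlip (i : Fin N) : LipschitzWith L (gradient (fi i)) :=
    LipschitzWith.of_dist_le_mul fun y z => by simpa only [dist_eq_norm] using hsmooth i y z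
  have hbound : BoundedStaleness idx τ K := fun i n hτn hnK => by
    simpa only [Nat.sub_le_iff_le_add] using hstale i n hτn (by omega)
  refine (sag_nonconvex_descent_general hdiff hlip hrun hbound hα0 hstep _ hτk (by omega)).trans ?_
  gcongr
  norm_num
end
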